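/- arXiv:2307.08402 — 2 statements merged into one kernel-verified Lean document; each statement's English description precedes it below -/
import Mathlib

section
/- Let X, Y be real random variables with distribution functions F and G. Then the pair (X,Y) is comonotonic if and only if (X,Y) has the same joint distribution as (F⁻¹(U), G⁻¹(U)), where U is a random variable uniformly distributed on (0,1). -/
/-!
Monotone functions of a common variable monovary (`MonovaryOn`), and for monovarying functions the
sets `{X ≤ x}` and `{Y ≤ y}` are nested. Hence the joint distribution function is the minimum of the
marginal ones, and a comonotonic law is determined by its marginals. By the Galois connection
`F⁻¹(u) ≤ x ↔ u ≤ F x`, the pair `(F⁻¹(U), G⁻¹(U))` is monovarying with the right marginals.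

Conversely, comonotonicity asks for a variable `Z` on the given probability space, which may carry
no uniform variable. The choice `Z = X + Y` works, because each of two monovarying functions is a
nondecreasing (and `1`-Lipschitz) function of their sum.
-/

open MeasureTheory ENNReal Set

/-- Generalized inverse (quantile function) of a distribution function `F`. -/
noncomputable def qinv (F : ℝ → ℝ) (u : ℝ) : ℝ := sInf {x : ℝ | u ≤ F x}

/-- A pair `(X, Y)` of real random variables is comonotonic if it has the same joint
distribution as `(f(Z), g(Z))` for some random variable `Z` and nondecreasing `f, g`. -/
def Comonotonic {Ω : Type*} [MeasurableSpace Ω] (P : MeasureTheory.Measure Ω)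
    (X Y : Ω → ℝ) : Prop :=
  ∃ (Z : Ω → ℝ) (f g : ℝ → ℝ), Measurable Z ∧ Monotone f ∧ Monotone g ∧
    P.map (fun ω => (X ω, Y ω)) = P.map (fun ω => (f (Z ω), g (Z ω)))

open ProbabilityTheory

section QuantileFunction

lemma qinv_le_iff (F : StieltjesFunction ℝ) {u : ℝ} (hne : {x | u ≤ F x}.Nonempty)
    (hbdd : BddBelow {x | u ≤ F x}) (x : ℝ) : qinv F u ≤ x ↔ u ≤ F x := by
  refine ⟨fun h => ?_, fun h => csInf_le hbdd h⟩
  rw [← F.iInf_Ioi_eq x]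
  refine le_ciInf fun r => ?_
  obtain ⟨z, hz, hzr⟩ := exists_lt_of_csInf_lt hne (h.trans_lt r.2)
  exact hz.trans (F.mono hzr.le)

lemma qinv_cdf_le_iff (μ : Measure ℝ) {u : ℝ} (hu : u ∈ Ioo (0 : ℝ) 1) (x : ℝ) :
    qinv (cdf μ) u ≤ x ↔ u ≤ cdf μ x := by
  obtain ⟨y, hy⟩ := ((tendsto_cdf_atTop μ).eventually (lt_mem_nhds hu.2)).exists
  obtain ⟨w, hw⟩ := ((tendsto_cdf_atBot μ).eventually (gt_mem_nhds hu.1)).exists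
  refine qinv_le_iff (cdf μ) ⟨y, hy.le⟩ ⟨w, fun z hz => ?_⟩ x
  exact ((monotone_cdf μ).reflect_lt (hw.trans_le hz)).le

lemma monotoneOn_qinv_cdf (μ : Measure ℝ) : MonotoneOn (qinv (cdf μ)) (Ioo 0 1) :=
  fun _ hu _ hv huv =>
    (qinv_cdf_le_iff μ hu _).2 (huv.trans ((qinv_cdf_le_iff μ hv _).1 le_rfl))

lemma aemeasurable_qinv_cdf (μ : Measure ℝ) :
    AEMeasurable (qinv (cdf μ)) (volume.restrict (Ioo 0 1)) :=
  aemeasurable_restrict_of_monotoneOn measurableSet_Ioo (monotoneOn_qinv_cdf μ)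

lemma volume_Iic_inter_Ioo_zero_one {c : ℝ} (hc : c ≤ 1) :
    volume (Iic c ∩ Ioo 0 1) = ENNReal.ofReal c := by
  calc volume (Iic c ∩ Ioo 0 1)
      = volume (Iic c ∩ Ioc 0 1) := measure_congr ((ae_eq_refl _).inter Ioo_ae_eq_Ioc)
    _ = volume (Ioc 0 c) := by rw [inter_comm, Ioc_inter_Iic, min_eq_right hc]
    _ = ENNReal.ofReal c := by rw [Real.volume_Ioc, sub_zero]

lemma map_qinv_cdf (μ : Measure ℝ) [IsProbabilityMeasure μ] :
    (volume.restrict (Ioo 0 1)).map (qinv (cdf μ)) = μ := by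
  refine (Measure.ext_of_Iic μ _ fun x => ?_).symm
  have hpre : qinv (cdf μ) ⁻¹' Iic x ∩ Ioo 0 1 = Iic (cdf μ x) ∩ Ioo 0 1 := by
    ext u
    exact and_congr_left fun hu => qinv_cdf_le_iff μ hu x
  rw [Measure.map_apply_of_aemeasurable (aemeasurable_qinv_cdf μ) measurableSet_Iic,
    Measure.restrict_apply' measurableSet_Ioo, hpre,
    volume_Iic_inter_Ioo_zero_one (cdf_le_one μ x), ofReal_cdf]

end QuantileFunction

section JointLaw

lemma inter_preimage_Iic_subset_or_subset_of_monovaryOn {ι α β : Type*} [Preorder α]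
    [LinearOrder β] {a : ι → α} {b : ι → β} {s : Set ι} (hab : MonovaryOn a b s) (x : α) (y : β) :
    s ∩ a ⁻¹' Iic x ⊆ b ⁻¹' Iic y ∨ s ∩ b ⁻¹' Iic y ⊆ a ⁻¹' Iic x := by
  by_contra! h
  obtain ⟨⟨i, ⟨his, hix⟩, hiy⟩, ⟨j, ⟨hjs, hjy⟩, hjx⟩⟩ := h.imp not_subset.1 not_subset.1
  have hlt : b j < b i := lt_of_le_of_lt hjy (not_le.1 hiy)
  exact hjx ((hab hjs his hlt).trans hix)

lemma map_prodMk_Iic_prod_Iic_of_monovaryOn {Ω α β : Type*} [MeasurableSpace Ω]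
    {P : Measure Ω} [Preorder α] [TopologicalSpace α] [ClosedIicTopology α] [MeasurableSpace α]
    [OpensMeasurableSpace α] [LinearOrder β] [TopologicalSpace β] [ClosedIicTopology β]
    [MeasurableSpace β] [OpensMeasurableSpace β] {X : Ω → α} {Y : Ω → β} {s : Set Ω}
    (hX : AEMeasurable X P) (hY : AEMeasurable Y P) (hXY : MonovaryOn X Y s)
    (hs : ∀ᵐ ω ∂P, ω ∈ s) (x : α) (y : β) :
    P.map (fun ω => (X ω, Y ω)) (Iic x ×ˢ Iic y) = min (P.map X (Iic x)) (P.map Y (Iic y)) := by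
  rw [Measure.map_apply_of_aemeasurable (hX.prodMk hY) (measurableSet_Iic.prod measurableSet_Iic),
    Measure.map_apply_of_aemeasurable hX measurableSet_Iic,
    Measure.map_apply_of_aemeasurable hY measurableSet_Iic, mk_preimage_prod]
  refine le_antisymm
    (le_min (measure_mono inter_subset_left) (measure_mono inter_subset_right)) ?_
  rcases inter_preimage_Iic_subset_or_subset_of_monovaryOn hXY x y with h | h
  · exact (min_le_left _ _).trans
      (measure_mono_ae (hs.mono fun ω hω hωx => ⟨hωx, h ⟨hω, hωx⟩⟩))
  · exact (min_le_right _ _).trans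
      (measure_mono_ae (hs.mono fun ω hω hωy => ⟨h ⟨hω, hωy⟩, hωy⟩))

variable {α β : Type*} [LinearOrder α] [TopologicalSpace α] [OrderTopology α]
  [SecondCountableTopology α] [MeasurableSpace α] [BorelSpace α] [LinearOrder β]
  [TopologicalSpace β] [OrderTopology β] [SecondCountableTopology β] [MeasurableSpace β]
  [BorelSpace β]

lemma measure_prod_ext_of_Iic (μ ν : Measure (α × β)) [IsFiniteMeasure μ]
    (h : ∀ x y, μ (Iic x ×ˢ Iic y) = ν (Iic x ×ˢ Iic y)) : μ = ν := by
  have fst_restrict (ρ : Measure (α × β)) {s : Set α} {t : Set β} (hs : MeasurableSet s) :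
      (ρ.restrict (Prod.snd ⁻¹' t)).fst s = ρ (s ×ˢ t) := by
    rw [Measure.fst_apply hs, Measure.restrict_apply (measurable_fst hs), prod_eq]
  have snd_restrict (ρ : Measure (α × β)) {s : Set α} {t : Set β} (ht : MeasurableSet t) :
      (ρ.restrict (Prod.fst ⁻¹' s)).snd t = ρ (s ×ˢ t) := by
    rw [Measure.snd_apply ht, Measure.restrict_apply (measurable_snd ht), prod_eq, inter_comm]
  have fst_eq (y : β) : (μ.restrict (Prod.snd ⁻¹' Iic y)).fst
      = (ν.restrict (Prod.snd ⁻¹' Iic y)).fst :=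
    Measure.ext_of_Iic _ _ fun x => by
      rw [fst_restrict μ measurableSet_Iic, h, fst_restrict ν measurableSet_Iic]
  have snd_eq {s : Set α} (hs : MeasurableSet s) : (μ.restrict (Prod.fst ⁻¹' s)).snd
      = (ν.restrict (Prod.fst ⁻¹' s)).snd :=
    Measure.ext_of_Iic _ _ fun y => by
      rw [snd_restrict μ measurableSet_Iic, ← fst_restrict μ hs, fst_eq, fst_restrict ν hs,
        snd_restrict ν measurableSet_Iic]
  exact Measure.ext_prod fun hs ht => by
    rw [← snd_restrict μ ht, snd_eq hs, snd_restrict ν ht]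

variable {Ω Ω' : Type*} [MeasurableSpace Ω] [MeasurableSpace Ω'] {P : Measure Ω} {P' : Measure Ω'}

theorem map_prodMk_eq_of_monovaryOn [IsFiniteMeasure P] {X : Ω → α} {Y : Ω → β} {s : Set Ω}
    {X' : Ω' → α} {Y' : Ω' → β} {s' : Set Ω'} (hX : AEMeasurable X P) (hY : AEMeasurable Y P)
    (hXY : MonovaryOn X Y s) (hs : ∀ᵐ ω ∂P, ω ∈ s) (hX' : AEMeasurable X' P')
    (hY' : AEMeasurable Y' P') (hXY' : MonovaryOn X' Y' s') (hs' : ∀ᵐ ω ∂P', ω ∈ s')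
    (hmapX : P.map X = P'.map X') (hmapY : P.map Y = P'.map Y') :
    P.map (fun ω => (X ω, Y ω)) = P'.map (fun ω => (X' ω, Y' ω)) :=
  measure_prod_ext_of_Iic _ _ fun x y => by
    rw [map_prodMk_Iic_prod_Iic_of_monovaryOn hX hY hXY hs,
      map_prodMk_Iic_prod_Iic_of_monovaryOn hX' hY' hXY' hs', hmapX, hmapY]

end JointLaw

section MonotoneFactorization

variable {ι : Type*} {a b : ι → ℝ}

lemma exists_monotone_comp_eq_of_le_add_posPart {c : ι → ℝ}
    (h : ∀ i j, a j ≤ a i + (c j - c i)⁺) : ∃ f : ℝ → ℝ, Monotone f ∧ ∀ i, f (c i) = a i := by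
  -- The McShane extension `z ↦ ⨅ i, a i + |z - c i|` made monotone by replacing `|·|` with `(·)⁺`.
  have hbdd (z : ℝ) : BddBelow (range fun i => a i + (z - c i)⁺) := by
    rcases isEmpty_or_nonempty ι with _ | ⟨⟨j⟩⟩
    · rw [range_eq_empty]
      exact bddBelow_empty
    refine ⟨a j - (c j - z)⁺, forall_mem_range.2 fun i => ?_⟩
    have hsub : (c j - c i)⁺ ≤ (c j - z)⁺ + (z - c i)⁺ :=
      sup_le (by linarith [le_posPart (c j - z), le_posPart (z - c i)])
        (add_nonneg (posPart_nonneg _) (posPart_nonneg _))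
    linarith [h i j]
  refine ⟨fun z => ⨅ i, a i + (z - c i)⁺, fun z w hzw => ?_, fun j => ?_⟩
  · exact ciInf_mono (hbdd z) fun i =>
      add_le_add_right (posPart_mono (sub_le_sub_right hzw _)) _
  · have : Nonempty ι := ⟨j⟩
    refine le_antisymm ((ciInf_le (hbdd _) j).trans_eq ?_) (le_ciInf fun i => h i j)
    rw [sub_self, posPart_zero, add_zero]

lemma exists_monotone_comp_add_eq_of_monovaryOn {s : Set ι} (hab : MonovaryOn a b s) :
    ∃ f : ℝ → ℝ, Monotone f ∧ ∀ i ∈ s, f (a i + b i) = a i := by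
  have hle (i j : s) : a j ≤ a i + (a j + b j - (a i + b i))⁺ := by
    rcases le_or_gt (a j) (a i) with hji | hij
    · exact hji.trans (le_add_of_nonneg_right (posPart_nonneg _))
    · have hb : b i ≤ b j := hab.symm i.2 j.2 hij
      linarith [le_posPart (a j + b j - (a i + b i))]
  obtain ⟨f, hf, hfa⟩ := exists_monotone_comp_eq_of_le_add_posPart hle
  exact ⟨f, hf, fun i hi => hfa ⟨i, hi⟩⟩

end MonotoneFactorization

section Comonotonic

variable {Ω Ω' : Type*} [MeasurableSpace Ω] [MeasurableSpace Ω'] {P : Measure Ω} {P' : Measure Ω'}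
  {X Y : Ω → ℝ} {a b : Ω' → ℝ} {s : Set Ω'}

lemma Comonotonic.map_prodMk_eq [IsFiniteMeasure P] (h : Comonotonic P X Y)
    (hX : AEMeasurable X P) (hY : AEMeasurable Y P) (ha : AEMeasurable a P')
    (hb : AEMeasurable b P') (hab : MonovaryOn a b s) (hs : ∀ᵐ u ∂P', u ∈ s)
    (hmapX : P.map X = P'.map a) (hmapY : P.map Y = P'.map b) :
    P.map (fun ω => (X ω, Y ω)) = P'.map (fun u => (a u, b u)) := by
  obtain ⟨Z, f, g, hZ, hf, hg, hlaw⟩ := h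
  have hfZ : Measurable fun ω => f (Z ω) := hf.measurable.comp hZ
  have hgZ : Measurable fun ω => g (Z ω) := hg.measurable.comp hZ
  have hmapf : P.map (fun ω => f (Z ω)) = P.map X := by
    rw [← Measure.fst_map_prodMk hgZ, ← hlaw, Measure.fst_map_prodMk₀ hY]
  have hmapg : P.map (fun ω => g (Z ω)) = P.map Y := by
    rw [← Measure.snd_map_prodMk hfZ, ← hlaw, Measure.snd_map_prodMk₀ hX]
  rw [hlaw]
  exact map_prodMk_eq_of_monovaryOn hfZ.aemeasurable hgZ.aemeasurable
    (((hf.monovary hg).comp_right Z).monovaryOn univ) (ae_of_all _ mem_univ) ha hb hab hs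
    (hmapf.trans hmapX) (hmapg.trans hmapY)

lemma comonotonic_of_map_prodMk_eq (hX : Measurable X) (hY : Measurable Y)
    (ha : AEMeasurable a P') (hb : AEMeasurable b P') (hab : MonovaryOn a b s)
    (hs : ∀ᵐ u ∂P', u ∈ s)
    (h : P.map (fun ω => (X ω, Y ω)) = P'.map (fun u => (a u, b u))) : Comonotonic P X Y := by
  obtain ⟨f, hf, hfa⟩ := exists_monotone_comp_add_eq_of_monovaryOn hab
  obtain ⟨g, hg, hgb⟩ := exists_monotone_comp_add_eq_of_monovaryOn hab.symm
  have hmeas : MeasurableSet {p : ℝ × ℝ | f (p.1 + p.2) = p.1 ∧ g (p.1 + p.2) = p.2} := by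
    have hsum : Measurable fun p : ℝ × ℝ => p.1 + p.2 := by fun_prop
    exact (measurableSet_eq_fun (hf.measurable.comp hsum) measurable_fst).inter
      (measurableSet_eq_fun (hg.measurable.comp hsum) measurable_snd)
  have hfix : ∀ᵐ ω ∂P, f (X ω + Y ω) = X ω ∧ g (X ω + Y ω) = Y ω := by
    rw [← ae_map_iff (hX.prodMk hY).aemeasurable hmeas, h, ae_map_iff (ha.prodMk hb) hmeas]
    filter_upwards [hs] with u hu
    exact ⟨hfa u hu, add_comm (a u) (b u) ▸ hgb u hu⟩
  refine ⟨fun ω => X ω + Y ω, f, g, hX.add hY, hf, hg, Measure.map_congr ?_⟩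
  filter_upwards [hfix] with ω hω
  rw [hω.1, hω.2]

theorem comonotonic_iff_map_prodMk_eq [IsFiniteMeasure P] (hX : Measurable X) (hY : Measurable Y)
    (ha : AEMeasurable a P') (hb : AEMeasurable b P') (hab : MonovaryOn a b s)
    (hs : ∀ᵐ u ∂P', u ∈ s) (hmapX : P.map X = P'.map a) (hmapY : P.map Y = P'.map b) :
    Comonotonic P X Y ↔ P.map (fun ω => (X ω, Y ω)) = P'.map (fun u => (a u, b u)) :=
  ⟨fun h => h.map_prodMk_eq hX.aemeasurable hY.aemeasurable ha hb hab hs hmapX hmapY,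
    comonotonic_of_map_prodMk_eq hX hY ha hb hab hs⟩

end Comonotonic

lemma cdf_map_apply {Ω : Type*} [MeasurableSpace Ω] (P : Measure Ω) [IsProbabilityMeasure P]
    {X : Ω → ℝ} (hX : AEMeasurable X P) (x : ℝ) :
    cdf (P.map X) x = (P {ω | X ω ≤ x}).toReal := by
  have := Measure.isProbabilityMeasure_map hX
  rw [cdf_eq_real, Measure.real, Measure.map_apply_of_aemeasurable hX measurableSet_Iic]
  rfl

/-- `(X,Y)` is comonotonic iff `(X,Y)` has the same joint distribution as
`(F⁻¹(U), G⁻¹(U))` where `U` is uniform on `(0,1)` (i.e. the joint law equals the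
pushforward of Lebesgue measure on `(0,1)` under `u ↦ (F⁻¹(u), G⁻¹(u))`). -/
theorem comonotonic_iff_quantile_representation {Ω : Type*} [MeasurableSpace Ω]
    (P : MeasureTheory.Measure Ω) [IsProbabilityMeasure P]
    (X Y : Ω → ℝ) (hX : Measurable X) (hY : Measurable Y)
    (F G : ℝ → ℝ)
    (hF : ∀ x, F x = (P {ω | X ω ≤ x}).toReal)
    (hG : ∀ y, G y = (P {ω | Y ω ≤ y}).toReal) :
    Comonotonic P X Y ↔
      P.map (fun ω => (X ω, Y ω))
        = MeasureTheory.Measure.map (fun u => (qinv F u, qinv G u))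
            (MeasureTheory.volume.restrict (Ioo (0:ℝ) 1)) := by
  have := Measure.isProbabilityMeasure_map (μ := P) hX.aemeasurable
  have := Measure.isProbabilityMeasure_map (μ := P) hY.aemeasurable
  obtain rfl : F = cdf (P.map X) :=
    funext fun x => (hF x).trans (cdf_map_apply P hX.aemeasurable x).symm
  obtain rfl : G = cdf (P.map Y) :=
    funext fun y => (hG y).trans (cdf_map_apply P hY.aemeasurable y).symm
  exact comonotonic_iff_map_prodMk_eq hX hY (aemeasurable_qinv_cdf _) (aemeasurable_qinv_cdf _)
    ((monotoneOn_qinv_cdf _).monovaryOn (monotoneOn_qinv_cdf _))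
    (ae_restrict_mem measurableSet_Ioo) (map_qinv_cdf _).symm (map_qinv_cdf _).symm
end

section
/- Let p ∈ [1,∞), d > 1, and let μ, ν be probability measures on ℝ^d with finite p-th moments whose joint distribution functions are H_μ(x₁,…,x_d) = min{F₁(x₁),…,F_d(x_d)} and H_ν(y₁,…,y_d) = min{G₁(y₁),…,G_d(y_d)}, where F_i and G_i are the marginal distribution functions of μ and ν respectively (i.e. both μ and ν have the comonotonicity copula M). Then, with ℝ^d equipped with the p-norm, W_p(μ,ν)^p = Σ_{i=1}^d ∫_{ℝ×ℝ} |x_i − y_i|^p dπ_i(x_i,y_i), where π_i is the unique probability measure on ℝ² with joint distribution function min{F_i(x_i), G_i(y_i)}; equivalently W_p(μ,ν)^p = Σ_{i=1}^d ∫₀¹ |F_i⁻¹(u) − G_i⁻¹(u)|^p du. -/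
/-!
If `U` is uniform on `(0, 1)`, a law on `ℝ^d` with the comonotonicity copula is the law of
`(F₁⁻¹(U), …, F_d⁻¹(U))`. Using the same `U` for `μ` and `ν` couples every pair of `i`-th marginals
comonotonically. Since the cost splits over the coordinates, it remains to see that the comonotone
coupling is optimal on the line.

There, the joint distribution function of any coupling is at most `min (F x) (G y)`, with equality
for the comonotone one, so it is enough that the cost decreases when the joint distribution function
increases. By Tonelli, `∫ (x - y - t)⁺ dπ = ∫ π((s, ∞) × (-∞, s - t]) ds`, and the integrand is the
second marginal of `(-∞, s - t]` minus the joint distribution function at `(s, s - t)`. This settles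
the costs `(x - y - t)⁺`; and `((x - y)⁺) ^ p` is a mixture of these, whence `|x - y| ^ p` after
exchanging `x` and `y`.
-/

open MeasureTheory ENNReal Set

/-- `π` is a coupling of `μ` and `ν`. -/
def IsCoupling {α : Type*} [MeasurableSpace α] (π : MeasureTheory.Measure (α × α))
    (μ ν : MeasureTheory.Measure α) : Prop :=
  π.map Prod.fst = μ ∧ π.map Prod.snd = ν

/-- The `p`-th power of the `p`-Wasserstein distance on `ℝ^d` equipped with the
`p`-norm: `W_p(μ,ν)^p = inf over couplings π of ∫ ‖x-y‖_p^p dπ`, where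
`‖x-y‖_p^p = ∑ i, |x i - y i|^p`. -/
noncomputable def WpPowD (d : ℕ) (p : ℝ) (μ ν : MeasureTheory.Measure (Fin d → ℝ)) : ℝ≥0∞ :=
  ⨅ π ∈ {π : MeasureTheory.Measure ((Fin d → ℝ) × (Fin d → ℝ)) | IsCoupling π μ ν},
    ∫⁻ z, ENNReal.ofReal (∑ i, |z.1 i - z.2 i| ^ p) ∂π

open ProbabilityTheory

/-! ### Measures determined by their joint distribution functions -/

section JointDistributionFunction

lemma isCountablySpanning_range_Iic {α : Type*} [Preorder α] [Nonempty α] [IsDirectedOrder α]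
    [(Filter.atTop : Filter α).IsCountablyGenerated] :
    IsCountablySpanning (range (Iic : α → Set α)) := by
  obtain ⟨u, hu⟩ := Filter.exists_seq_tendsto (Filter.atTop : Filter α)
  refine ⟨fun n ↦ Iic (u n), fun n ↦ mem_range_self _, eq_univ_of_forall fun x ↦ ?_⟩
  exact mem_iUnion.2 (hu.eventually_ge_atTop x).exists

variable {α β ι : Type*} [TopologicalSpace α] [LinearOrder α] [OrderTopology α]
  [SecondCountableTopology α] [MeasurableSpace α] [BorelSpace α]
  [TopologicalSpace β] [LinearOrder β] [OrderTopology β]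
  [SecondCountableTopology β] [MeasurableSpace β] [BorelSpace β]

lemma generateFrom_range_Iic :
    MeasurableSpace.generateFrom (range (Iic : α → Set α)) = ‹MeasurableSpace α› := by
  rw [← borel_eq_generateFrom_Iic α, BorelSpace.measurable_eq (α := α)]

variable [Nonempty α] [Nonempty β]

lemma ext_of_Iic_prod_Iic {π τ : Measure (α × β)} [IsFiniteMeasure π]
    (h : ∀ x y, π (Iic x ×ˢ Iic y) = τ (Iic x ×ˢ Iic y)) : π = τ := by
  have hgen := generateFrom_eq_prod (generateFrom_range_Iic (α := α))
    (generateFrom_range_Iic (α := β)) isCountablySpanning_range_Iic isCountablySpanning_range_Iic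
  obtain ⟨s, hs, hs_univ⟩ := (isCountablySpanning_range_Iic (α := α)).prod
    (isCountablySpanning_range_Iic (α := β))
  refine Measure.ext_of_generateFrom_of_iUnion _ s hgen.symm (isPiSystem_Iic.prod isPiSystem_Iic)
    hs_univ hs (fun _ ↦ measure_ne_top π _) ?_
  rintro _ ⟨_, ⟨x, rfl⟩, _, ⟨y, rfl⟩, rfl⟩
  exact h x y

lemma ext_of_Iic_pi [Finite ι] {π τ : Measure (ι → α)} [IsFiniteMeasure π]
    (h : ∀ x, π (Iic x) = τ (Iic x)) : π = τ := by
  have hgen := generateFrom_eq_pi (fun _ : ι ↦ generateFrom_range_Iic (α := α))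
    fun _ ↦ isCountablySpanning_range_Iic
  obtain ⟨s, hs, hs_univ⟩ := IsCountablySpanning.pi
    fun _ : ι ↦ isCountablySpanning_range_Iic (α := α)
  refine Measure.ext_of_generateFrom_of_iUnion _ s hgen.symm (IsPiSystem.pi fun _ ↦ isPiSystem_Iic)
    hs_univ hs (fun _ ↦ measure_ne_top π _) ?_
  rintro _ ⟨s, hs, rfl⟩
  choose x hx using fun i ↦ hs i (mem_univ i)
  obtain rfl : s = fun i ↦ Iic (x i) := funext fun i ↦ (hx i).symm
  simpa only [pi_univ_Iic] using h x

end JointDistributionFunction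

/-! ### Couplings -/

section Coupling

variable {α β Ω : Type*} [MeasurableSpace α] [MeasurableSpace β] [MeasurableSpace Ω]
  {π : Measure (α × α)} {μ ν : Measure α}

lemma IsCoupling.isProbabilityMeasure [IsProbabilityMeasure μ] (h : IsCoupling π μ ν) :
    IsProbabilityMeasure π := by
  have : IsProbabilityMeasure (π.map Prod.fst) := by rwa [h.1]
  exact π.isProbabilityMeasure_of_map Prod.fst

lemma IsCoupling.measure_prod_le_min (h : IsCoupling π μ ν) (s t : Set α) :
    π (s ×ˢ t) ≤ min (μ s) (ν t) := by
  rw [← h.1, ← h.2]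
  exact le_min
    ((measure_mono fun _ hz ↦ hz.1).trans (Measure.le_map_apply measurable_fst.aemeasurable s))
    ((measure_mono fun _ hz ↦ hz.2).trans (Measure.le_map_apply measurable_snd.aemeasurable t))

lemma IsCoupling.map {f : α → β} (hf : Measurable f) (h : IsCoupling π μ ν) :
    IsCoupling (π.map (Prod.map f f)) (μ.map f) (ν.map f) := by
  rw [← h.1, ← h.2]
  constructor
  · rw [Measure.map_map measurable_fst (hf.prodMap hf), Measure.map_map hf measurable_fst,
      Prod.map_fst']
  · rw [Measure.map_map measurable_snd (hf.prodMap hf), Measure.map_map hf measurable_snd,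
      Prod.map_snd']

lemma isCoupling_map_prodMk {ρ : Measure Ω} {f g : Ω → α} (hf : AEMeasurable f ρ)
    (hg : AEMeasurable g ρ) : IsCoupling (ρ.map fun ω ↦ (f ω, g ω)) (ρ.map f) (ρ.map g) :=
  ⟨AEMeasurable.map_map_of_aemeasurable measurable_fst.aemeasurable (hf.prodMk hg),
    AEMeasurable.map_map_of_aemeasurable measurable_snd.aemeasurable (hf.prodMk hg)⟩

lemma measure_compl_prod (π : Measure (α × β)) [IsFiniteMeasure π] {s : Set α} {t : Set β}
    (hs : MeasurableSet s) (ht : MeasurableSet t) :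
    π (sᶜ ×ˢ t) = π.map Prod.snd t - π (s ×ˢ t) := by
  have hdiff : sᶜ ×ˢ t = Prod.snd ⁻¹' t \ s ×ˢ t := by ext; simp; tauto
  have hsub : s ×ˢ t ⊆ Prod.snd ⁻¹' t := fun _ hz ↦ hz.2
  rw [hdiff, measure_sdiff hsub (hs.prod ht).nullMeasurableSet (measure_ne_top _ _),
    Measure.map_apply measurable_snd ht]

end Coupling

/-! ### Monotonicity of the cost in the joint distribution function -/

/-- The nonnegative, nondecreasing, convex function on `ℝ` with second derivative `κ` that vanishes
at `-∞`, as a mixture of the hinges `z ↦ (z - t)⁺`. -/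
noncomputable def hingeIntegral (κ : Measure ℝ) (z : ℝ) : ℝ≥0∞ := ∫⁻ t, ENNReal.ofReal (z - t) ∂κ

lemma hingeIntegral_eq_setLIntegral_measure_Iic (κ : Measure ℝ) [SFinite κ] (z : ℝ) :
    hingeIntegral κ z = ∫⁻ s in Iio z, κ (Iic s) := by
  have hS : MeasurableSet {w : ℝ × ℝ | w.1 ≤ w.2 ∧ w.2 < z} :=
    (measurableSet_le measurable_fst measurable_snd).inter
      (measurableSet_lt measurable_snd measurable_const)
  calc hingeIntegral κ z
      = ∫⁻ t, volume (Ico t z) ∂κ := by simp only [hingeIntegral, Real.volume_Ico]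
    _ = ∫⁻ s, κ {t | t ≤ s ∧ s < z} :=
      (Measure.prod_apply (ν := volume) hS).symm.trans (Measure.prod_apply_symm hS)
    _ = ∫⁻ s in Iio z, κ (Iic s) := by
      rw [← lintegral_indicator measurableSet_Iio]
      refine lintegral_congr fun s ↦ ?_
      by_cases hs : s < z <;> simp [hs, Iic]

/-- The right derivative of `z ↦ (z⁺) ^ p`. For `p = 1` this is the indicator function of `[0, ∞)`,
by the convention `0 ^ 0 = 1`. -/
noncomputable def rpowRightDeriv (p : ℝ) (hp : 1 ≤ p) : StieltjesFunction ℝ where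
  toFun := (Ici 0).indicator fun s ↦ p * s ^ (p - 1)
  mono' x y hxy := by
    by_cases hx : x ∈ Ici 0
    · have hy : y ∈ Ici 0 := le_trans hx hxy
      have hxp : x ^ (p - 1) ≤ y ^ (p - 1) := Real.rpow_le_rpow hx hxy (by linarith)
      simpa only [indicator_of_mem hx, indicator_of_mem hy] using
        mul_le_mul_of_nonneg_left hxp (by linarith)
    · rw [indicator_of_notMem hx]
      exact indicator_nonneg (fun s hs ↦ mul_nonneg (by linarith) (Real.rpow_nonneg hs _)) y
  right_continuous' x := by
    have hcont : Continuous fun s : ℝ ↦ p * s ^ (p - 1) :=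
      continuous_const.mul (Real.continuous_rpow_const (by linarith))
    rcases le_or_gt 0 x with hx | hx
    · refine hcont.continuousWithinAt.congr (fun y hy ↦ ?_) ?_
      · exact indicator_of_mem (hx.trans hy) _
      · exact indicator_of_mem hx _
    · refine ContinuousAt.continuousWithinAt (continuousAt_const (y := (0 : ℝ)) |>.congr ?_)
      filter_upwards [Iio_mem_nhds hx] with y (hy : y < 0)
      exact (indicator_of_notMem (notMem_Ici.2 hy) _).symm

lemma tendsto_rpowRightDeriv_atBot {p : ℝ} (hp : 1 ≤ p) :
    Filter.Tendsto (rpowRightDeriv p hp) Filter.atBot (nhds 0) := by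
  have hzero : ∀ s < 0, rpowRightDeriv p hp s = 0 := fun s hs ↦
    indicator_of_notMem (notMem_Ici.2 hs) fun s ↦ p * s ^ (p - 1)
  exact tendsto_const_nhds.congr'
    ((Filter.eventually_lt_atBot 0).mono fun s hs ↦ (hzero s hs).symm)

lemma setLIntegral_Iio_rpowRightDeriv {p : ℝ} (hp : 1 ≤ p) (z : ℝ) :
    ∫⁻ s in Iio z, ENNReal.ofReal (rpowRightDeriv p hp s) = ENNReal.ofReal z ^ p := by
  have hp0 : 0 < p := by linarith
  have hIoc : ∫⁻ s in Iio z, ENNReal.ofReal (rpowRightDeriv p hp s)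
      = ∫⁻ s in Ioc 0 z, ENNReal.ofReal (p * s ^ (p - 1)) := by
    have hind : ∀ s, ENNReal.ofReal (rpowRightDeriv p hp s)
        = (Ici 0).indicator (fun s ↦ ENNReal.ofReal (p * s ^ (p - 1))) s := fun s ↦
      (congrFun (indicator_comp_of_zero (f := fun s ↦ p * s ^ (p - 1)) ENNReal.ofReal_zero) s).symm
    simp only [hind]
    rw [setLIntegral_indicator measurableSet_Ici, Ici_inter_Iio,
      restrict_Ico_eq_restrict_Ioc]
  rw [hIoc]
  rcases le_or_gt z 0 with hz | hz
  · simp [Ioc_eq_empty_of_le hz, ENNReal.ofReal_of_nonpos hz, hp0]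
  have hint : IntervalIntegrable (fun s : ℝ ↦ p * s ^ (p - 1)) volume 0 z :=
    (intervalIntegral.intervalIntegrable_rpow' (by linarith)).const_mul p
  have hnonneg : ∀ s ∈ Ioc 0 z, 0 ≤ p * s ^ (p - 1) := fun s hs ↦
    mul_nonneg hp0.le (Real.rpow_nonneg hs.1.le _)
  calc ∫⁻ s in Ioc 0 z, ENNReal.ofReal (p * s ^ (p - 1))
      = ENNReal.ofReal (∫ s in 0..z, p * s ^ (p - 1)) := by
        rw [intervalIntegral.integral_of_le hz.le, ofReal_integral_eq_lintegral_ofReal hint.1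
          ((ae_restrict_iff' measurableSet_Ioc).2 (.of_forall hnonneg))]
    _ = ENNReal.ofReal (z ^ p) := by
        rw [intervalIntegral.integral_const_mul, integral_rpow (Or.inl (by linarith)),
          sub_add_cancel, Real.zero_rpow hp0.ne', sub_zero, mul_div_cancel₀ _ hp0.ne']
    _ = ENNReal.ofReal z ^ p := (ENNReal.ofReal_rpow_of_pos hz).symm

lemma hingeIntegral_rpowRightDeriv {p : ℝ} (hp : 1 ≤ p) (z : ℝ) :
    hingeIntegral (rpowRightDeriv p hp).measure z = ENNReal.ofReal z ^ p := by
  simp only [hingeIntegral_eq_setLIntegral_measure_Iic,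
    StieltjesFunction.measure_Iic _ (tendsto_rpowRightDeriv_atBot hp), sub_zero]
  exact setLIntegral_Iio_rpowRightDeriv hp z

lemma ofReal_abs_rpow {p : ℝ} (hp : 0 < p) (z : ℝ) :
    ENNReal.ofReal (|z| ^ p) = ENNReal.ofReal z ^ p + ENNReal.ofReal (-z) ^ p := by
  rw [← ENNReal.ofReal_rpow_of_nonneg (abs_nonneg z) hp.le]
  rcases le_total 0 z with hz | hz
  · simp [abs_of_nonneg hz, ENNReal.ofReal_of_nonpos (neg_nonpos.2 hz), hp]
  · simp [abs_of_nonpos hz, ENNReal.ofReal_of_nonpos hz, hp]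

lemma lintegral_ofReal_sub_sub (π : Measure (ℝ × ℝ)) [SFinite π] (t : ℝ) :
    ∫⁻ z, ENNReal.ofReal (z.1 - z.2 - t) ∂π = ∫⁻ s, π (Ioi s ×ˢ Iic (s - t)) := by
  have hS : MeasurableSet {w : (ℝ × ℝ) × ℝ | w.2 < w.1.1 ∧ w.1.2 ≤ w.2 - t} := by
    measurability
  calc ∫⁻ z, ENNReal.ofReal (z.1 - z.2 - t) ∂π
      = ∫⁻ z, volume {s | s < z.1 ∧ z.2 ≤ s - t} ∂π := by
        refine lintegral_congr fun z ↦ ?_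
        have hIco : {s | s < z.1 ∧ z.2 ≤ s - t} = Ico (z.2 + t) z.1 := by
          ext s
          simp [le_sub_iff_add_le, and_comm]
        rw [hIco, Real.volume_Ico, sub_sub]
    _ = ∫⁻ s, π (Ioi s ×ˢ Iic (s - t)) :=
      (Measure.prod_apply (ν := volume) hS).symm.trans (Measure.prod_apply_symm hS)

section Monotonicity

variable {π τ : Measure (ℝ × ℝ)} [IsFiniteMeasure π] [IsFiniteMeasure τ]

lemma lintegral_ofReal_sub_sub_le (hsnd : π.map Prod.snd = τ.map Prod.snd)
    (h : ∀ x y, π (Iic x ×ˢ Iic y) ≤ τ (Iic x ×ˢ Iic y)) (t : ℝ) :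
    ∫⁻ z, ENNReal.ofReal (z.1 - z.2 - t) ∂τ ≤ ∫⁻ z, ENNReal.ofReal (z.1 - z.2 - t) ∂π := by
  simp only [lintegral_ofReal_sub_sub, ← compl_Iic,
    measure_compl_prod _ measurableSet_Iic measurableSet_Iic, hsnd]
  exact lintegral_mono fun s ↦ tsub_le_tsub_left (h _ _) _

lemma lintegral_hingeIntegral_sub_le (κ : Measure ℝ) [SFinite κ]
    (hsnd : π.map Prod.snd = τ.map Prod.snd)
    (h : ∀ x y, π (Iic x ×ˢ Iic y) ≤ τ (Iic x ×ˢ Iic y)) :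
    ∫⁻ z, hingeIntegral κ (z.1 - z.2) ∂τ ≤ ∫⁻ z, hingeIntegral κ (z.1 - z.2) ∂π := by
  simp only [hingeIntegral]
  rw [lintegral_lintegral_swap (μ := τ) (by fun_prop),
    lintegral_lintegral_swap (μ := π) (by fun_prop)]
  exact lintegral_mono (lintegral_ofReal_sub_sub_le hsnd h)

lemma lintegral_hingeIntegral_sub_swap_le (κ : Measure ℝ) [SFinite κ]
    (hfst : π.map Prod.fst = τ.map Prod.fst)
    (h : ∀ x y, π (Iic x ×ˢ Iic y) ≤ τ (Iic x ×ˢ Iic y)) :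
    ∫⁻ z, hingeIntegral κ (z.2 - z.1) ∂τ ≤ ∫⁻ z, hingeIntegral κ (z.2 - z.1) ∂π := by
  have hswap (ρ : Measure (ℝ × ℝ)) : ∫⁻ z, hingeIntegral κ (z.2 - z.1) ∂ρ
      = ∫⁻ z, hingeIntegral κ (z.1 - z.2) ∂ρ.map Prod.swap :=
    (lintegral_map_equiv (fun z : ℝ × ℝ ↦ hingeIntegral κ (z.1 - z.2))
      MeasurableEquiv.prodComm).symm
  rw [hswap, hswap]
  refine lintegral_hingeIntegral_sub_le κ ?_ fun x y ↦ ?_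
  · rw [Measure.map_map measurable_snd measurable_swap,
      Measure.map_map measurable_snd measurable_swap]
    exact hfst
  · simpa only [Measure.map_apply measurable_swap (measurableSet_Iic.prod measurableSet_Iic),
      preimage_swap_prod] using h y x

theorem lintegral_abs_sub_rpow_le {p : ℝ} (hp : 1 ≤ p) (hfst : π.map Prod.fst = τ.map Prod.fst)
    (hsnd : π.map Prod.snd = τ.map Prod.snd)
    (h : ∀ x y, π (Iic x ×ˢ Iic y) ≤ τ (Iic x ×ˢ Iic y)) :
    ∫⁻ z, ENNReal.ofReal (|z.1 - z.2| ^ p) ∂τ ≤ ∫⁻ z, ENNReal.ofReal (|z.1 - z.2| ^ p) ∂π := by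
  have hle := lintegral_hingeIntegral_sub_le (rpowRightDeriv p hp).measure hsnd h
  have hle' := lintegral_hingeIntegral_sub_swap_le (rpowRightDeriv p hp).measure hfst h
  simp only [hingeIntegral_rpowRightDeriv] at hle hle'
  simp only [ofReal_abs_rpow (zero_lt_one.trans_le hp), neg_sub]
  rw [lintegral_add_left (by fun_prop), lintegral_add_left (by fun_prop)]
  exact add_le_add hle hle'

end Monotonicity

/-! ### Quantile transforms -/

/-- The uniform law on `(0, 1)`. The endpoints are left out because `qinv` may take junk values
there. -/
noncomputable abbrev unitUniform : Measure ℝ := volume.restrict (Ioo 0 1)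

instance : IsProbabilityMeasure unitUniform := ⟨by simp⟩

lemma unitUniform_setOf_ofReal_le {c : ℝ≥0∞} (hc : c ≤ 1) :
    unitUniform {u | ENNReal.ofReal u ≤ c} = c := by
  have hc_top : c ≠ ⊤ := ne_top_of_le_ne_top one_ne_top hc
  have hset : {u | ENNReal.ofReal u ≤ c} = Iic c.toReal := by
    ext u
    exact ofReal_le_iff_le_toReal hc_top
  rw [hset, unitUniform, restrict_Ioo_eq_restrict_Ioc, Measure.restrict_apply measurableSet_Iic,
    inter_comm, Ioc_inter_Iic, Real.volume_Ioc, sub_zero,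
    inf_eq_right.2 (toReal_le_of_le_ofReal zero_le_one (by simpa)), ofReal_toReal hc_top]

lemma unitUniform_eq_of_forall_mem_iff {s : Set ℝ} {c : ℝ≥0∞} (hc : c ≤ 1)
    (h : ∀ u ∈ Ioo (0 : ℝ) 1, u ∈ s ↔ ENNReal.ofReal u ≤ c) : unitUniform s = c := by
  rw [← unitUniform_setOf_ofReal_le hc]
  exact measure_congr ((ae_restrict_iff' measurableSet_Ioo).2 (.of_forall fun u hu ↦
    propext (h u hu)))

/-- The quantile function of a probability measure on `ℝ`. -/
noncomputable def quantile (m : Measure ℝ) : ℝ → ℝ := qinv (cdf m)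

lemma qinv_le_iff_s10 (f : StieltjesFunction ℝ) {u : ℝ} (hlt : ∃ a, f a < u) (hle : ∃ b, u ≤ f b)
    (x : ℝ) : qinv f u ≤ x ↔ u ≤ f x := by
  obtain ⟨a, ha⟩ := hlt
  have hbdd : BddBelow {x | u ≤ f x} :=
    ⟨a, fun y hy ↦ (f.mono.reflect_lt (ha.trans_le hy)).le⟩
  refine ⟨fun h ↦ ?_, fun h ↦ csInf_le hbdd h⟩
  have hgt : ∀ y ∈ Ioi x, u ≤ f y := fun y hy ↦ by
    obtain ⟨z, hz, hzy⟩ := exists_lt_of_csInf_lt hle (h.trans_lt hy)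
    exact le_trans hz (f.mono hzy.le)
  exact ge_of_tendsto ((f.right_continuous x).mono_left (nhdsWithin_mono x Ioi_subset_Ici_self))
    (Filter.eventually_of_mem self_mem_nhdsWithin hgt)

section Quantile

variable (m n : Measure ℝ) [IsProbabilityMeasure m] [IsProbabilityMeasure n]

lemma quantile_le_iff {u : ℝ} (hu : u ∈ Ioo 0 1) (x : ℝ) :
    quantile m u ≤ x ↔ ENNReal.ofReal u ≤ m (Iic x) := by
  rw [← ofReal_cdf, ENNReal.ofReal_le_ofReal_iff (cdf_nonneg m x)]
  exact qinv_le_iff_s10 _ ((tendsto_cdf_atBot m).eventually (eventually_lt_nhds hu.1)).exists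
    ((tendsto_cdf_atTop m).eventually (eventually_ge_nhds hu.2)).exists x

lemma aemeasurable_quantile : AEMeasurable (quantile m) unitUniform := by
  refine aemeasurable_restrict_of_monotoneOn measurableSet_Ioo fun u hu v hv huv ↦ ?_
  rw [quantile_le_iff m hu]
  exact (ENNReal.ofReal_le_ofReal huv).trans ((quantile_le_iff m hv _).1 le_rfl)

lemma map_quantile : unitUniform.map (quantile m) = m := by
  have := Measure.isProbabilityMeasure_map (aemeasurable_quantile m)
  refine Measure.ext_of_Iic _ _ fun x ↦ ?_
  rw [Measure.map_apply_of_aemeasurable (aemeasurable_quantile m) measurableSet_Iic]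
  exact unitUniform_eq_of_forall_mem_iff prob_le_one fun u hu ↦ quantile_le_iff m hu x

/-- The comonotone coupling of two laws on `ℝ`. -/
noncomputable def quantileCoupling (m n : Measure ℝ) : Measure (ℝ × ℝ) :=
  unitUniform.map fun u ↦ (quantile m u, quantile n u)

lemma isCoupling_quantileCoupling : IsCoupling (quantileCoupling m n) m n := by
  simpa only [map_quantile, quantileCoupling] using
    isCoupling_map_prodMk (aemeasurable_quantile m) (aemeasurable_quantile n)

lemma quantileCoupling_Iic_prod_Iic (x y : ℝ) :
    quantileCoupling m n (Iic x ×ˢ Iic y) = min (m (Iic x)) (n (Iic y)) := by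
  rw [quantileCoupling, Measure.map_apply_of_aemeasurable
    ((aemeasurable_quantile m).prodMk (aemeasurable_quantile n))
    (measurableSet_Iic.prod measurableSet_Iic)]
  refine unitUniform_eq_of_forall_mem_iff (min_le_of_left_le prob_le_one) fun u hu ↦ ?_
  simp [quantile_le_iff _ hu]

lemma lintegral_quantileCoupling {c : ℝ × ℝ → ℝ≥0∞} (hc : Measurable c) :
    ∫⁻ z, c z ∂quantileCoupling m n = ∫⁻ u in Ioo 0 1, c (quantile m u, quantile n u) :=
  lintegral_map' hc.aemeasurable ((aemeasurable_quantile m).prodMk (aemeasurable_quantile n))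

variable {m n}

lemma eq_quantileCoupling {π : Measure (ℝ × ℝ)} [IsFiniteMeasure π]
    (h : ∀ x y, π (Iic x ×ˢ Iic y) = min (m (Iic x)) (n (Iic y))) : π = quantileCoupling m n :=
  ext_of_Iic_prod_Iic fun x y ↦ (h x y).trans (quantileCoupling_Iic_prod_Iic m n x y).symm

theorem IsCoupling.lintegral_quantileCoupling_le {π : Measure (ℝ × ℝ)} (hπ : IsCoupling π m n)
    {p : ℝ} (hp : 1 ≤ p) :
    ∫⁻ z, ENNReal.ofReal (|z.1 - z.2| ^ p) ∂quantileCoupling m n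
      ≤ ∫⁻ z, ENNReal.ofReal (|z.1 - z.2| ^ p) ∂π := by
  have hq := isCoupling_quantileCoupling m n
  have := hπ.isProbabilityMeasure
  have := hq.isProbabilityMeasure
  refine lintegral_abs_sub_rpow_le hp (hπ.1.trans hq.1.symm) (hπ.2.trans hq.2.symm) fun x y ↦ ?_
  rw [quantileCoupling_Iic_prod_Iic]
  exact hπ.measure_prod_le_min _ _

end Quantile

/-! ### Comonotone laws on `ℝ^d` -/

section Comonotone

instance isProbabilityMeasure_map_eval {ι : Type*} {α : ι → Type*} [∀ i, MeasurableSpace (α i)]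
    {μ : Measure (∀ i, α i)} [IsProbabilityMeasure μ] (i : ι) :
    IsProbabilityMeasure (μ.map fun z ↦ z i) :=
  Measure.isProbabilityMeasure_map (measurable_pi_apply i).aemeasurable

variable {ι : Type*} {μ : Measure (ι → ℝ)}

/-- `μ` has the comonotonicity copula `M`: its joint distribution function is the minimum of its
marginal distribution functions. -/
def IsComonotone (μ : Measure (ι → ℝ)) : Prop :=
  ∀ x, μ (Iic x) = ⨅ i, μ.map (fun z ↦ z i) (Iic (x i))

lemma isComonotone_of_toReal_eq_iInf_cdf [Nonempty ι] [IsProbabilityMeasure μ]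
    (h : ∀ x, (μ (Iic x)).toReal = ⨅ i, cdf (μ.map fun z ↦ z i) (x i)) : IsComonotone μ := by
  intro x
  have htop : ⨅ i, μ.map (fun z ↦ z i) (Iic (x i)) ≠ ⊤ :=
    ne_top_of_le_ne_top (measure_ne_top _ _) (iInf_le _ (Classical.arbitrary ι))
  rw [← ENNReal.toReal_eq_toReal_iff' (measure_ne_top _ _) htop, h,
    ENNReal.toReal_iInf fun _ ↦ measure_ne_top _ _]
  simp only [cdf_eq_real, measureReal_def]

lemma aemeasurable_quantile_pi [Countable ι] (μ : Measure (ι → ℝ)) [IsProbabilityMeasure μ] :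
    AEMeasurable (fun u i ↦ quantile (μ.map fun z ↦ z i) u) unitUniform :=
  aemeasurable_pi_iff.2 fun _ ↦ aemeasurable_quantile _

theorem IsComonotone.map_quantile_pi [Finite ι] [Nonempty ι] [IsProbabilityMeasure μ]
    (hμ : IsComonotone μ) :
    unitUniform.map (fun u i ↦ quantile (μ.map fun z ↦ z i) u) = μ := by
  have := Measure.isProbabilityMeasure_map (aemeasurable_quantile_pi μ)
  refine ext_of_Iic_pi fun x ↦ ?_
  rw [Measure.map_apply_of_aemeasurable (aemeasurable_quantile_pi μ) measurableSet_Iic]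
  refine unitUniform_eq_of_forall_mem_iff prob_le_one fun u hu ↦ ?_
  simp [hμ x, Pi.le_def, quantile_le_iff _ hu]

lemma lintegral_ofReal_sum_abs_sub_rpow [Fintype ι] (π : Measure ((ι → ℝ) × (ι → ℝ)))
    (p : ℝ) :
    ∫⁻ z, ENNReal.ofReal (∑ i, |z.1 i - z.2 i| ^ p) ∂π
      = ∑ i, ∫⁻ z, ENNReal.ofReal (|z.1 - z.2| ^ p)
          ∂π.map (Prod.map (fun x ↦ x i) fun y ↦ y i) := by
  simp_rw [ENNReal.ofReal_sum_of_nonneg fun _ _ ↦ Real.rpow_nonneg (abs_nonneg _) p]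
  rw [lintegral_finsetSum _ fun _ _ ↦ by fun_prop]
  refine Finset.sum_congr rfl fun i _ ↦ ?_
  rw [lintegral_map (by fun_prop) (by fun_prop)]
  rfl

end Comonotone

section Wasserstein

variable {d : ℕ} {p : ℝ} {μ ν : Measure (Fin d → ℝ)} [IsProbabilityMeasure μ]
  [IsProbabilityMeasure ν]

theorem sum_lintegral_quantileCoupling_le_WpPowD (hp : 1 ≤ p) :
    ∑ i, ∫⁻ z, ENNReal.ofReal (|z.1 - z.2| ^ p)
        ∂quantileCoupling (μ.map fun z ↦ z i) (ν.map fun z ↦ z i) ≤ WpPowD d p μ ν := by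
  refine le_iInf₂ fun π hπ ↦ ?_
  rw [lintegral_ofReal_sum_abs_sub_rpow]
  exact Finset.sum_le_sum fun i _ ↦
    (IsCoupling.map (measurable_pi_apply i) hπ).lintegral_quantileCoupling_le hp

theorem IsComonotone.WpPowD_le [NeZero d] (hμ : IsComonotone μ) (hν : IsComonotone ν) (p : ℝ) :
    WpPowD d p μ ν ≤ ∑ i, ∫⁻ z, ENNReal.ofReal (|z.1 - z.2| ^ p)
      ∂quantileCoupling (μ.map fun z ↦ z i) (ν.map fun z ↦ z i) := by
  have hμm := aemeasurable_quantile_pi μ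
  have hνm := aemeasurable_quantile_pi ν
  have hπ := isCoupling_map_prodMk hμm hνm
  rw [hμ.map_quantile_pi, hν.map_quantile_pi] at hπ
  refine (iInf₂_le (unitUniform.map _) hπ).trans_eq ?_
  rw [lintegral_ofReal_sum_abs_sub_rpow]
  refine Finset.sum_congr rfl fun i _ ↦ ?_
  rw [AEMeasurable.map_map_of_aemeasurable (by fun_prop) (hμm.prodMk hνm)]
  rfl

theorem IsComonotone.WpPowD_eq [NeZero d] (hμ : IsComonotone μ) (hν : IsComonotone ν)
    (hp : 1 ≤ p) :
    WpPowD d p μ ν = ∑ i, ∫⁻ z, ENNReal.ofReal (|z.1 - z.2| ^ p)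
      ∂quantileCoupling (μ.map fun z ↦ z i) (ν.map fun z ↦ z i) :=
  (hμ.WpPowD_le hν p).antisymm (sum_lintegral_quantileCoupling_le_WpPowD hp)

end Wasserstein

lemma eq_cdf_map_eval {ι : Type*} {μ : Measure (ι → ℝ)} [IsProbabilityMeasure μ] {F : ι → ℝ → ℝ}
    (hF : ∀ i t, F i t = (μ {x | x i ≤ t}).toReal) : F = fun i ↦ ⇑(cdf (μ.map fun z ↦ z i)) := by
  ext i t
  rw [hF, cdf_eq_real, measureReal_def,
    Measure.map_apply (measurable_pi_apply i) measurableSet_Iic]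
  rfl

theorem wasserstein_comonotone_copula_general (d : ℕ) [NeZero d] (p : ℝ) (hp : 1 ≤ p)
    (μ ν : Measure (Fin d → ℝ)) [IsProbabilityMeasure μ] [IsProbabilityMeasure ν]
    (F G : Fin d → ℝ → ℝ)
    (hF : ∀ i t, F i t = (μ {x | x i ≤ t}).toReal)
    (hG : ∀ i t, G i t = (ν {x | x i ≤ t}).toReal)
    (hμM : ∀ x : Fin d → ℝ, (μ {y | ∀ i, y i ≤ x i}).toReal = ⨅ i, F i (x i))
    (hνM : ∀ y : Fin d → ℝ, (ν {z | ∀ i, z i ≤ y i}).toReal = ⨅ i, G i (y i)) :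
    (∀ πs : Fin d → Measure (ℝ × ℝ),
        (∀ i, IsProbabilityMeasure (πs i) ∧
          ∀ x y : ℝ, πs i (Iic x ×ˢ Iic y)
            = min ((μ.map fun z ↦ z i) (Iic x)) ((ν.map fun z ↦ z i) (Iic y))) →
        WpPowD d p μ ν = ∑ i, ∫⁻ z, ENNReal.ofReal (|z.1 - z.2| ^ p) ∂(πs i)) ∧
      WpPowD d p μ ν
        = ∑ i, ∫⁻ u in Ioo (0 : ℝ) 1, ENNReal.ofReal (|qinv (F i) u - qinv (G i) u| ^ p) := by
  obtain rfl := eq_cdf_map_eval hF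
  obtain rfl := eq_cdf_map_eval hG
  have hμ : IsComonotone μ := isComonotone_of_toReal_eq_iInf_cdf hμM
  have hν : IsComonotone ν := isComonotone_of_toReal_eq_iInf_cdf hνM
  rw [hμ.WpPowD_eq hν hp]
  refine ⟨fun πs hπs ↦ Finset.sum_congr rfl fun i _ ↦ ?_, Finset.sum_congr rfl fun i _ ↦ ?_⟩
  · have := (hπs i).1
    rw [eq_quantileCoupling (hπs i).2]
  · exact lintegral_quantileCoupling _ _ (by fun_prop)

/-- if `μ, ν` on `ℝ^d` both have the comonotonicity copula `M`, i.e. the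
joint distribution functions are `H_μ(x) = min_i F_i(x_i)` and `H_ν(y) = min_i G_i(y_i)`,
then (with the `p`-norm) `W_p(μ,ν)^p = ∑ i ∫ |x_i - y_i|^p dπ_i` where `π_i` is the
unique probability measure on `ℝ²` with joint distribution function
`min {F_i(x_i), G_i(y_i)}`; equivalently `W_p(μ,ν)^p = ∑ i ∫₀¹ |F_i⁻¹(u) - G_i⁻¹(u)|^p du`. -/
theorem wasserstein_comonotone_copula (d : ℕ) (hd : 1 < d) (p : ℝ) (hp : 1 ≤ p)
    (μ ν : MeasureTheory.Measure (Fin d → ℝ)) [IsProbabilityMeasure μ] [IsProbabilityMeasure ν]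
    (hμmom : ∫⁻ x, ENNReal.ofReal (∑ i, |x i| ^ p) ∂μ ≠ ⊤)
    (hνmom : ∫⁻ x, ENNReal.ofReal (∑ i, |x i| ^ p) ∂ν ≠ ⊤)
    (F G : Fin d → ℝ → ℝ)
    (hF : ∀ i t, F i t = (μ {x | x i ≤ t}).toReal)
    (hG : ∀ i t, G i t = (ν {x | x i ≤ t}).toReal)
    (hμM : ∀ x : Fin d → ℝ, (μ {y | ∀ i, y i ≤ x i}).toReal = ⨅ i, F i (x i))
    (hνM : ∀ y : Fin d → ℝ, (ν {z | ∀ i, z i ≤ y i}).toReal = ⨅ i, G i (y i)) :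
    (∀ πs : Fin d → MeasureTheory.Measure (ℝ × ℝ),
        (∀ i, IsProbabilityMeasure (πs i) ∧
          ∀ x y : ℝ, πs i (Iic x ×ˢ Iic y)
            = min ((μ.map fun z => z i) (Iic x)) ((ν.map fun z => z i) (Iic y))) →
        WpPowD d p μ ν = ∑ i, ∫⁻ z, ENNReal.ofReal (|z.1 - z.2| ^ p) ∂(πs i)) ∧
      WpPowD d p μ ν
        = ∑ i, ∫⁻ u in Ioo (0:ℝ) 1, ENNReal.ofReal (|qinv (F i) u - qinv (G i) u| ^ p) := by
  have : NeZero d := ⟨by omega⟩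
  exact wasserstein_comonotone_copula_general d p hp μ ν F G hF hG hμM hνM
end
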